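/- Let γ^1, γ^2, γ^3, γ^4 be a Clifford family of N×N complex matrices in dimension 4, let z = (1/2)·Σ_{a=1}^4 γ^a ⊗ γ^a, and let W := γ^1 γ^2 γ^3 γ^4 (the chirality matrix, W² = 1). Then W ⊗ W = (2/3)·z⁴ − (8/3)·z² + 1; equivalently, the chiral projector (1/2)(1 − W⊗W) equals −(1/3)·z²(z² − 4), the spectral projector of z onto the eigenvalues ±1, while (1/2)(1 + W⊗W) equals (1/3)(z²−1)(z²−3), the spectral projector onto the eigenvalues 0, ±2. -/

import Mathlib

open Kronecker

/-!
If `x` anticommutes with `y` and `x'` with `y'`, then `x ⊗ x'` commutes with `y ⊗ y'`, the two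
signs cancelling. So `2 z` is a sum of four commuting involutions `γ^a ⊗ γ^a`, whose product is
`W ⊗ W`. Let `eₖ` be the elementary symmetric functions of four commuting involutions. Then
`e₁² = 4 + 2 e₂` and `e₂² = 6 + 4 e₂ + 6 e₄`, because `x² = 1` collapses every repeated factor;
eliminating `e₂` expresses `e₄ = W ⊗ W` as a polynomial in `e₁ = 2 z`.
-/

section CommutingInvolutions

theorem nsmul_prod_of_mul_self_eq_one {R : Type*} [CommRing R] {a b c d : R}
    (ha : a * a = 1) (hb : b * b = 1) (hc : c * c = 1) (hd : d * d = 1) :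
    24 • (a * b * c * d) = (a + b + c + d) ^ 4 - 16 • (a + b + c + d) ^ 2 + 24 • 1 := by
  obtain ⟨e₂, he₂⟩ : ∃ e₂, e₂ = a * b + a * c + a * d + b * c + b * d + c * d := ⟨_, rfl⟩
  have e₁_sq : (a + b + c + d) ^ 2 = 4 + 2 * e₂ := by
    rw [he₂]
    linear_combination ha + hb + hc + hd
  have e₂_sq : e₂ ^ 2 = 6 + 4 * e₂ + 6 * (a * b * c * d) := by
    grind
  rw [show (a + b + c + d) ^ 4 = ((a + b + c + d) ^ 2) ^ 2 by ring, e₁_sq]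
  linear_combination -4 * e₂_sq

open scoped IsMulCommutative in
theorem nsmul_prod_of_commute_of_mul_self_eq_one {R : Type*} [Ring R] {s : Fin 4 → R}
    (hcomm : ∀ i j, Commute (s i) (s j)) (hs : ∀ i, s i * s i = 1) :
    24 • (s 0 * s 1 * s 2 * s 3) = (∑ i, s i) ^ 4 - 16 • (∑ i, s i) ^ 2 + 24 • 1 := by
  let S := Subring.closure (Set.range s)
  have : IsMulCommutative S := Subring.isMulCommutative_closure <| by
    rintro _ ⟨i, rfl⟩ _ ⟨j, rfl⟩
    exact hcomm i j
  let t (i : Fin 4) : S := ⟨s i, Subring.subset_closure (Set.mem_range_self i)⟩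
  have ht (i : Fin 4) : t i * t i = 1 := Subtype.ext (hs i)
  rw [Fin.sum_univ_four]
  exact congrArg Subtype.val (nsmul_prod_of_mul_self_eq_one (ht 0) (ht 1) (ht 2) (ht 3))

variable {K A : Type*} [Field K] [NeZero (2 : K)] [Ring A] [Algebra K A]

theorem prod_eq_of_eq_half_sum [NeZero (3 : K)] {s : Fin 4 → A}
    (hcomm : ∀ i j, Commute (s i) (s j)) (hs : ∀ i, s i * s i = 1)
    {z : A} (hz : z = (1 / 2 : K) • ∑ i, s i) :
    s 0 * s 1 * s 2 * s 3 = (2 / 3 : K) • z ^ 4 - (8 / 3 : K) • z ^ 2 + 1 := by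
  have h₂ : (2 : K) ≠ 0 := two_ne_zero
  have h₃ : (3 : K) ≠ 0 := three_ne_zero
  have h₂₄ : (24 : K) ≠ 0 := by
    rw [show (24 : K) = 2 ^ 3 * 3 by norm_num]
    exact mul_ne_zero (pow_ne_zero 3 h₂) h₃
  have hsum : ∑ i, s i = (2 : K) • z := by
    rw [hz, smul_smul, mul_one_div_cancel h₂, one_smul]
  have hprod := nsmul_prod_of_commute_of_mul_self_eq_one hcomm hs
  rw [hsum, smul_pow, smul_pow] at hprod
  refine smul_right_injective A h₂₄ ?_
  linear_combination (norm := (match_scalars <;> field_simp <;> ring)) hprod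

theorem half_smul_one_sub_eq {z w : A}
    (hw : w = (2 / 3 : K) • z ^ 4 - (8 / 3 : K) • z ^ 2 + 1) :
    (1 / 2 : K) • (1 - w) = -((1 / 3 : K) • (z ^ 2 * (z ^ 2 - (4 : K) • (1 : A)))) := by
  have h₂ : (2 : K) ≠ 0 := two_ne_zero
  rw [hw, mul_sub, ← pow_add, mul_smul_comm, mul_one]
  match_scalars <;> field_simp <;> ring

theorem half_smul_one_add_eq [NeZero (3 : K)] {z w : A}
    (hw : w = (2 / 3 : K) • z ^ 4 - (8 / 3 : K) • z ^ 2 + 1) :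
    (1 / 2 : K) • (1 + w) = (1 / 3 : K) • ((z ^ 2 - 1) * (z ^ 2 - (3 : K) • (1 : A))) := by
  have h₂ : (2 : K) ≠ 0 := two_ne_zero
  have h₃ : (3 : K) ≠ 0 := three_ne_zero
  rw [hw, sub_mul, mul_sub, ← pow_add, mul_smul_comm, mul_one, one_mul]
  match_scalars <;> field_simp <;> ring

end CommutingInvolutions

/-- A Clifford family for the Euclidean form on `ι`: the relations `γ^a γ^b + γ^b γ^a = 2 δ^{ab}`,
which make distinct members anticommute. The values lie in any ring, matrices being one case. -/
def IsCliffordFamily {ι A : Type*} [DecidableEq ι] [Ring A] (γ : ι → A) : Prop :=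
  ∀ a b, γ a * γ b + γ b * γ a = if a = b then 2 else 0

theorem commute_kronecker_of_anticommute {R m n : Type*} [CommRing R] [Fintype m] [Fintype n]
    {x y : Matrix m m R} {x' y' : Matrix n n R}
    (h : x * y = -(y * x)) (h' : x' * y' = -(y' * x')) :
    Commute (x ⊗ₖ x') (y ⊗ₖ y') :=
  calc (x ⊗ₖ x') * (y ⊗ₖ y') = (-(y * x)) ⊗ₖ (-(y' * x')) := by
        rw [← Matrix.mul_kronecker_mul, h, h']
    _ = (y * x) ⊗ₖ (y' * x') := Matrix.ext fun _ _ => neg_mul_neg _ _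
    _ = (y ⊗ₖ y') * (x ⊗ₖ x') := Matrix.mul_kronecker_mul ..

namespace IsCliffordFamily

variable {ι R : Type*} [DecidableEq ι] [CommRing R]

section Algebra

variable {A : Type*} [Ring A] {γ : ι → A}

theorem mul_self [Algebra R A] (hγ : IsCliffordFamily γ) (h₂ : IsUnit (2 : R)) (a : ι) :
    γ a * γ a = 1 :=
  h₂.smul_left_cancel.1 <| by simpa [two_smul, one_add_one_eq_two] using hγ a a

theorem mul_eq_neg_mul (hγ : IsCliffordFamily γ) {a b : ι} (hab : a ≠ b) :
    γ a * γ b = -(γ b * γ a) :=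
  eq_neg_of_add_eq_zero_left <| by simpa [hab] using hγ a b

end Algebra

variable {m n : Type*} [Fintype m] [DecidableEq m] [Fintype n] [DecidableEq n]
  {γ : ι → Matrix m m R} {δ : ι → Matrix n n R}

theorem commute_kronecker (hγ : IsCliffordFamily γ) (hδ : IsCliffordFamily δ) (a b : ι) :
    Commute (γ a ⊗ₖ δ a) (γ b ⊗ₖ δ b) := by
  obtain rfl | hab := eq_or_ne a b
  · exact Commute.refl _
  · exact commute_kronecker_of_anticommute (hγ.mul_eq_neg_mul hab) (hδ.mul_eq_neg_mul hab)

theorem kronecker_mul_self (hγ : IsCliffordFamily γ) (hδ : IsCliffordFamily δ)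
    (h₂ : IsUnit (2 : R)) (a : ι) : (γ a ⊗ₖ δ a) * (γ a ⊗ₖ δ a) = 1 := by
  rw [← Matrix.mul_kronecker_mul, hγ.mul_self h₂, hδ.mul_self h₂, Matrix.one_kronecker_one]

end IsCliffordFamily

theorem so4_chirality_tensor_general {K m n : Type*} [Field K] [NeZero (2 : K)] [NeZero (3 : K)]
    [Fintype m] [DecidableEq m] [Fintype n] [DecidableEq n]
    {γ : Fin 4 → Matrix m m K} (hγ : IsCliffordFamily γ)
    {δ : Fin 4 → Matrix n n K} (hδ : IsCliffordFamily δ)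
    {z : Matrix (m × n) (m × n) K} (hz : z = (1 / 2 : K) • ∑ a, γ a ⊗ₖ δ a)
    {V : Matrix m m K} (hV : V = γ 0 * γ 1 * γ 2 * γ 3)
    {W : Matrix n n K} (hW : W = δ 0 * δ 1 * δ 2 * δ 3) :
    V ⊗ₖ W = (2 / 3 : K) • z ^ 4 - (8 / 3 : K) • z ^ 2 + 1 ∧
    (1 / 2 : K) • (1 - V ⊗ₖ W) =
      -((1 / 3 : K) • (z ^ 2 * (z ^ 2 - (4 : K) • (1 : Matrix (m × n) (m × n) K)))) ∧
    (1 / 2 : K) • (1 + V ⊗ₖ W) =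
      (1 / 3 : K) • ((z ^ 2 - 1) * (z ^ 2 - (3 : K) • (1 : Matrix (m × n) (m × n) K))) := by
  have hVW : V ⊗ₖ W = (2 / 3 : K) • z ^ 4 - (8 / 3 : K) • z ^ 2 + 1 := by
    rw [← prod_eq_of_eq_half_sum (hγ.commute_kronecker hδ)
      (hγ.kronecker_mul_self hδ (NeZero.ne (2 : K)).isUnit) hz, hV, hW]
    simp only [Matrix.mul_kronecker_mul]
  exact ⟨hVW, half_smul_one_sub_eq hVW, half_smul_one_add_eq hVW⟩

/-- For a Clifford family `γ^1,…,γ^4` in dimension 4, `z = (1/2)·Σ_a γ^a ⊗ γ^a` and the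
chirality matrix `W = γ^1γ^2γ^3γ^4`, one has `W⊗W = (2/3)z⁴ − (8/3)z² + 1`; equivalently
the chiral projector `(1/2)(1 − W⊗W)` equals `−(1/3)z²(z² − 4)` (spectral projector onto
the eigenvalues ±1 of z) and `(1/2)(1 + W⊗W)` equals `(1/3)(z²−1)(z²−3)` (spectral
projector onto the eigenvalues 0, ±2). -/
theorem so4_chirality_tensor {N : ℕ}
    (γ : Fin 4 → Matrix (Fin N) (Fin N) ℂ)
    (hγ : ∀ a b, γ a * γ b + γ b * γ a =
      if a = b then (2 : ℂ) • (1 : Matrix (Fin N) (Fin N) ℂ) else 0)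
    (z : Matrix (Fin N × Fin N) (Fin N × Fin N) ℂ)
    (hz : z = (1/2 : ℂ) • ∑ a, γ a ⊗ₖ γ a)
    (W : Matrix (Fin N) (Fin N) ℂ)
    (hW : W = γ 0 * γ 1 * γ 2 * γ 3) :
    W ⊗ₖ W = (2/3 : ℂ) • z ^ 4 - (8/3 : ℂ) • z ^ 2 +
        (1 : Matrix (Fin N × Fin N) (Fin N × Fin N) ℂ) ∧
    (1/2 : ℂ) • ((1 : Matrix (Fin N × Fin N) (Fin N × Fin N) ℂ) - W ⊗ₖ W) =
      -((1/3 : ℂ) • (z ^ 2 * (z ^ 2 -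
        (4 : ℂ) • (1 : Matrix (Fin N × Fin N) (Fin N × Fin N) ℂ)))) ∧
    (1/2 : ℂ) • ((1 : Matrix (Fin N × Fin N) (Fin N × Fin N) ℂ) + W ⊗ₖ W) =
      (1/3 : ℂ) • ((z ^ 2 - (1 : Matrix (Fin N × Fin N) (Fin N × Fin N) ℂ)) *
        (z ^ 2 - (3 : ℂ) • (1 : Matrix (Fin N × Fin N) (Fin N × Fin N) ℂ))) := by
  have clifford : IsCliffordFamily γ := by
    simpa only [IsCliffordFamily, two_smul, one_add_one_eq_two] using hγ
  exact so4_chirality_tensor_general clifford clifford hz hW hW
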